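/- For any finitely supported probability measures μ and ν on X, the (∞,1)-RPW distance equals the Lévy–Prokhorov distance: RPW_{∞,1}(μ, ν) = π(μ, ν). -/

import Mathlib

open MeasureTheory

noncomputable section

/-- `γ` is an `α`-partial transport plan from `μ` to `ν`: a Borel measure on `X × X` of
total mass `α` whose first marginal is dominated by `μ` and second marginal by `ν`. -/
def IsPartialPlan {X : Type*} [MeasurableSpace X] (μ ν : Measure X) (α : ℝ)
    (γ : Measure (X × X)) : Prop :=
  γ Set.univ = ENNReal.ofReal α ∧ γ.map Prod.fst ≤ μ ∧ γ.map Prod.snd ≤ ν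

/-- The `∞`-cost `w_∞(γ)` of a transport plan: the `γ`-essential supremum of the
distance `c(x, y)`. -/
def planCostInf {X : Type*} [MetricSpace X] [MeasurableSpace X]
    (γ : Measure (X × X)) : ℝ :=
  (essSup (fun z : X × X => ENNReal.ofReal (dist z.1 z.2)) γ).toReal

/-- The `α`-partial `∞`-Wasserstein distance `W_{∞,α}(μ, ν)`. -/
def partialWInf {X : Type*} [MetricSpace X] [MeasurableSpace X] (α : ℝ)
    (μ ν : Measure X) : ℝ :=
  sInf { c : ℝ | ∃ γ : Measure (X × X), IsPartialPlan μ ν α γ ∧ c = planCostInf γ }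

/-- The `(∞,k)`-RPW distance: the least `ε ∈ [0,1]` with `W_{∞,1-ε}(μ,ν) ≤ kε`. -/
def RPWInf {X : Type*} [MetricSpace X] [MeasurableSpace X] (k : ℝ)
    (μ ν : Measure X) : ℝ :=
  sInf { ε : ℝ | ε ∈ Set.Icc (0:ℝ) 1 ∧ partialWInf (1 - ε) μ ν ≤ k * ε }

/-- The Lévy–Prokhorov distance: the infimum of all `ε > 0` with
`μ(A) ≤ ν(A^ε) + ε` and `ν(A) ≤ μ(A^ε) + ε` for all Borel sets `A`, where
`A^ε = {x : c(x, A) < ε}` is the open `ε`-thickening of `A`. -/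
def LPdist {X : Type*} [MetricSpace X] [MeasurableSpace X] (μ ν : Measure X) : ℝ :=
  sInf { ε : ℝ | 0 < ε ∧ ∀ A : Set X, MeasurableSet A →
    μ A ≤ ν (Metric.thickening ε A) + ENNReal.ofReal ε ∧
    ν A ≤ μ (Metric.thickening ε A) + ENNReal.ofReal ε }

/-! A plan of mass `1 - ε` that moves points by less than `η ≥ ε` sends all but `ε` of the mass of
a set `A` into the `η`-thickening of `A`; this gives `LPdist μ ν ≤ RPWInf 1 μ ν`.

The converse is an approximate form of Strassen's theorem. Cut `X`, up to a set of small mass, into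
finitely many disjoint cells of small diameter. On unions of cells the Lévy–Prokhorov inequality is
Hall's condition with deficiency `ε` for the transport network joining nearby cells, so this network
has a flow of value almost `1 - ε`: after rounding the masses of the cells to multiples of `1 / n`,
this is Hall's marriage theorem for the unit copies. Spreading the flow over the cells as a sum of
product measures gives a partial plan of mass `1 - ε - δ` moving points by at most `ε + δ`, and the
infimum defining `RPWInf` absorbs `δ`. -/

open scoped NNReal ENNReal

section Hall

lemma sum_ite_apply_eq_le_one {α β : Type*} [Fintype α] [DecidableEq β] {f : α → β}
    (hf : f.Injective) (z : β) : ∑ x, (if f x = z then 1 else 0) ≤ 1 := by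
  rw [← Finset.card_filter]
  exact Finset.card_le_one.2 fun x hx y hy ↦ hf <|
    (Finset.mem_filter.1 hx).2.trans (Finset.mem_filter.1 hy).2.symm

lemma sum_floor_mul_le_sum_floor_mul_add {α β : Type*} {I : Finset α} {J : Finset β}
    {a : α → ℝ≥0} {b : β → ℝ≥0} {δ : ℝ≥0} (h : ∑ i ∈ I, a i ≤ ∑ j ∈ J, b j + δ) (c : ℝ≥0) :
    ∑ i ∈ I, ⌊c * a i⌋₊ ≤ ∑ j ∈ J, ⌊c * b j⌋₊ + (⌊c * δ⌋₊ + 1 + J.card) := by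
  have le_floor_add_one (x : ℝ≥0) : c * x ≤ ⌊c * x⌋₊ + 1 := (Nat.lt_floor_add_one _).le
  rw [← Nat.cast_le (α := ℝ≥0)]
  push_cast
  calc ∑ i ∈ I, (⌊c * a i⌋₊ : ℝ≥0) ≤ ∑ i ∈ I, c * a i := by
        gcongr with i
        exact Nat.floor_le zero_le
    _ ≤ c * (∑ j ∈ J, b j + δ) := by rw [← Finset.mul_sum]; gcongr
    _ = ∑ j ∈ J, c * b j + c * δ := by rw [mul_add, Finset.mul_sum]
    _ ≤ ∑ j ∈ J, ((⌊c * b j⌋₊ : ℝ≥0) + 1) + (⌊c * δ⌋₊ + 1) := by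
      gcongr with j <;> exact le_floor_add_one _
    _ = ∑ j ∈ J, (⌊c * b j⌋₊ : ℝ≥0) + (⌊c * δ⌋₊ + 1 + J.card) := by
      rw [Finset.sum_add_distrib, Finset.sum_const, nsmul_one]
      ring

variable {ι κ : Type*} [DecidableEq κ]

theorem exists_injective_sum_fin_of_card_le_card_biUnion_add (t : ι → Finset κ) (d : ℕ)
    (ht : ∀ I : Finset ι, I.card ≤ (I.biUnion t).card + d) :
    ∃ f : ι → κ ⊕ Fin d, f.Injective ∧ ∀ i j, f i = .inl j → j ∈ t i := by
  obtain ⟨f, hf, hft⟩ := (Finset.all_card_le_biUnion_card_iff_exists_injective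
    fun i ↦ (t i).disjSum (Finset.univ : Finset (Fin d))).1 fun I ↦ by
      obtain rfl | ⟨i, hi⟩ := I.eq_empty_or_nonempty
      · simp
      have hunion : I.biUnion (fun i ↦ (t i).disjSum (Finset.univ : Finset (Fin d))) =
          (I.biUnion t).disjSum Finset.univ := by
        ext (j | k)
        · simp
        · simpa using ⟨i, hi⟩
      simpa [hunion] using ht I
  exact ⟨f, hf, fun i j hij ↦ by simpa [hij] using hft i⟩

lemma exists_matching_copies_of_sum_le_sum_biUnion_add {t : ι → Finset κ} {a : ι → ℕ}
    {b : κ → ℕ} {d : ℕ} (h : ∀ I : Finset ι, ∑ i ∈ I, a i ≤ ∑ j ∈ I.biUnion t, b j + d) :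
    ∃ f : (Σ i, Fin (a i)) → (Σ j, Fin (b j)) ⊕ Fin d,
      f.Injective ∧ ∀ x y, f x = .inl y → y.1 ∈ t x.1 := by
  classical
  obtain ⟨f, hf, hft⟩ := exists_injective_sum_fin_of_card_le_card_biUnion_add
    (fun x : Σ i, Fin (a i) ↦ (t x.1).sigma fun j ↦ (Finset.univ : Finset (Fin (b j)))) d
    fun I ↦ calc
      I.card ≤ ((I.image Sigma.fst).sigma fun i ↦ (Finset.univ : Finset (Fin (a i)))).card :=
        Finset.card_le_card fun x hx ↦ by simpa using ⟨x.2, hx⟩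
      _ = ∑ i ∈ I.image Sigma.fst, a i := by simp
      _ ≤ ∑ j ∈ (I.image Sigma.fst).biUnion t, b j + d := h _
      _ = (((I.image Sigma.fst).biUnion t).sigma
            fun j ↦ (Finset.univ : Finset (Fin (b j)))).card + d := by simp
      _ = _ := by
        congr 2
        ext
        simp
  exact ⟨f, hf, fun x y hxy ↦ by simpa using hft x y hxy⟩

variable [Fintype ι] [Fintype κ]

/-- A feasible flow in the bipartite transport network with edges `i → j` for `j ∈ t i`: the
values `g i j` ship from the supplies `a` to the capacities `b`, not necessarily exhausting
either. The values live in `ℕ` or `ℝ≥0`, so that `g` is automatically nonnegative. -/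
structure IsFeasibleFlow {M : Type*} [AddCommMonoid M] [LE M] (t : ι → Finset κ) (a : ι → M)
    (b : κ → M) (g : ι → κ → M) : Prop where
  mem_of_ne_zero : ∀ i j, g i j ≠ 0 → j ∈ t i
  sum_row_le : ∀ i, ∑ j, g i j ≤ a i
  sum_col_le : ∀ j, ∑ i, g i j ≤ b j

theorem exists_nat_isFeasibleFlow_of_sum_le_sum_biUnion_add {t : ι → Finset κ} {a : ι → ℕ}
    {b : κ → ℕ} {d : ℕ} (h : ∀ I : Finset ι, ∑ i ∈ I, a i ≤ ∑ j ∈ I.biUnion t, b j + d) :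
    ∃ g, IsFeasibleFlow t a b g ∧ ∑ i, a i ≤ ∑ i, ∑ j, g i j + d := by
  classical
  obtain ⟨f, hf, hft⟩ := exists_matching_copies_of_sum_le_sum_biUnion_add h
  let χ (x : Σ i, Fin (a i)) (z : (Σ j, Fin (b j)) ⊕ Fin d) : ℕ := if f x = z then 1 else 0
  let g (i : ι) (j : κ) : ℕ := ∑ k, ∑ l, χ ⟨i, k⟩ (.inl ⟨j, l⟩)
  have sum_χ_eq_one (x) : ∑ y, χ x (.inl y) + ∑ e, χ x (.inr e) = 1 := by
    rw [← Fintype.sum_sum_type]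
    simp [χ]
  have sum_χ_le_one (z) : ∑ x, χ x z ≤ 1 := sum_ite_apply_eq_le_one hf z
  have row_sum (i : ι) : ∑ j, g i j = ∑ k, ∑ y, χ ⟨i, k⟩ (.inl y) := by
    simp only [Fintype.sum_sigma]
    exact Finset.sum_comm
  have col_sum (j : κ) : ∑ i, g i j = ∑ l, ∑ x, χ x (.inl ⟨j, l⟩) := by
    rw [Finset.sum_comm, Fintype.sum_sigma]
  refine ⟨g, ⟨fun i j hij ↦ ?_, fun i ↦ ?_, fun j ↦ ?_⟩, ?_⟩
  · obtain ⟨k, -, hk⟩ := Finset.exists_ne_zero_of_sum_ne_zero hij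
    obtain ⟨l, -, hl⟩ := Finset.exists_ne_zero_of_sum_ne_zero hk
    exact hft ⟨i, k⟩ ⟨j, l⟩ (by simpa [χ] using hl)
  · calc ∑ j, g i j = ∑ k, ∑ y, χ ⟨i, k⟩ (.inl y) := row_sum i
      _ ≤ ∑ k : Fin (a i), 1 :=
        Finset.sum_le_sum fun k _ ↦ (Nat.le_add_right _ _).trans (sum_χ_eq_one ⟨i, k⟩).le
      _ = a i := by simp
  · calc ∑ i, g i j = ∑ l, ∑ x, χ x (.inl ⟨j, l⟩) := col_sum j
      _ ≤ ∑ l : Fin (b j), 1 := Finset.sum_le_sum fun l _ ↦ sum_χ_le_one _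
      _ = b j := by simp
  · calc ∑ i, a i = ∑ x : Σ i, Fin (a i), 1 := by simp
      _ = ∑ x, ∑ y, χ x (.inl y) + ∑ e, ∑ x, χ x (.inr e) := by
        rw [Finset.sum_comm (γ := Fin d), ← Finset.sum_add_distrib]
        simp only [sum_χ_eq_one]
      _ ≤ ∑ x, ∑ y, χ x (.inl y) + ∑ e : Fin d, 1 := by gcongr; exact sum_χ_le_one _
      _ = ∑ i, ∑ j, g i j + d := by
        simp [row_sum, Fintype.sum_sigma (fun x : Σ i, Fin (a i) ↦ ∑ y, χ x (.inl y))]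

theorem exists_isFeasibleFlow_of_sum_le_sum_biUnion_add {t : ι → Finset κ} {a : ι → ℝ≥0}
    {b : κ → ℝ≥0} {δ η : ℝ≥0} (hη : 0 < η)
    (h : ∀ I : Finset ι, ∑ i ∈ I, a i ≤ ∑ j ∈ I.biUnion t, b j + δ) :
    ∃ g, IsFeasibleFlow t a b g ∧ ∑ i, a i ≤ ∑ i, ∑ j, g i j + δ + η := by
  -- Rounding to multiples of `1 / n` costs at most `1 / n` per supply, per capacity and in `δ`.
  obtain ⟨n, hn⟩ := exists_nat_ge ((Fintype.card ι + Fintype.card κ + 1) / η)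
  have hcard : Fintype.card ι + Fintype.card κ + 1 ≤ n * η := (div_le_iff₀ hη).1 hn
  have hn0 : 0 < (n : ℝ≥0) := lt_of_lt_of_le (by positivity) hn
  have le_floor_add_one (x : ℝ≥0) : n * x ≤ ⌊n * x⌋₊ + 1 := (Nat.lt_floor_add_one _).le
  have floor_le (x : ℝ≥0) : (⌊n * x⌋₊ : ℝ≥0) ≤ n * x := Nat.floor_le zero_le
  obtain ⟨g, hg, htotal⟩ := exists_nat_isFeasibleFlow_of_sum_le_sum_biUnion_add (t := t)
    (a := fun i ↦ ⌊n * a i⌋₊) (b := fun j ↦ ⌊n * b j⌋₊) (d := ⌊n * δ⌋₊ + 1 + Fintype.card κ)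
    fun I ↦ by grw [sum_floor_mul_le_sum_floor_mul_add (h I) n, Finset.card_le_univ (I.biUnion t)]
  refine ⟨fun i j ↦ g i j / n, ⟨fun i j hij ↦ ?_, fun i ↦ ?_, fun j ↦ ?_⟩, ?_⟩
  · exact hg.mem_of_ne_zero i j fun h0 ↦ hij (by simp [h0])
  · rw [← Finset.sum_div, div_le_iff₀' hn0]
    exact (mod_cast hg.sum_row_le i : ∑ j, (g i j : ℝ≥0) ≤ _).trans (floor_le _)
  · rw [← Finset.sum_div, div_le_iff₀' hn0]
    exact (mod_cast hg.sum_col_le j : ∑ i, (g i j : ℝ≥0) ≤ _).trans (floor_le _)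
  · refine le_of_mul_le_mul_left ?_ hn0
    calc n * ∑ i, a i = ∑ i, n * a i := Finset.mul_sum ..
      _ ≤ ∑ i, ((⌊n * a i⌋₊ : ℝ≥0) + 1) := by gcongr; exact le_floor_add_one _
      _ = (∑ i, ⌊n * a i⌋₊ : ℕ) + Fintype.card ι := by simp [Finset.sum_add_distrib]
      _ ≤ (∑ i, ∑ j, g i j + (⌊n * δ⌋₊ + 1 + Fintype.card κ) : ℕ) + Fintype.card ι := by gcongr
      _ = ∑ i, ∑ j, (g i j : ℝ≥0) + ⌊n * δ⌋₊ + (Fintype.card ι + Fintype.card κ + 1) := by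
        push_cast; ring
      _ ≤ ∑ i, ∑ j, (g i j : ℝ≥0) + n * δ + n * η := by gcongr; exact floor_le _
      _ = _ := by
        simp only [← Finset.sum_div]
        field_simp

end Hall

section Plans

variable {X : Type*} [MeasurableSpace X] {μ ν : Measure X}

lemma isPartialPlan_prod [IsProbabilityMeasure μ] [IsProbabilityMeasure ν] :
    IsPartialPlan μ ν 1 (μ.prod ν) := by
  refine ⟨?_, ?_, ?_⟩ <;> simp

lemma isPartialPlan_zero : IsPartialPlan μ ν 0 0 := by
  refine ⟨?_, ?_, ?_⟩ <;> simp [Measure.zero_le]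

lemma IsPartialPlan.exists_le {α β : ℝ} {γ : Measure (X × X)} (hγ : IsPartialPlan μ ν β γ)
    (hαβ : α ≤ β) : ∃ γ' ≤ γ, IsPartialPlan μ ν α γ' := by
  obtain ⟨hmass, hfst, hsnd⟩ := hγ
  let c : ℝ≥0∞ := ENNReal.ofReal α / γ Set.univ
  have hc : c ≤ 1 := ENNReal.div_le_of_le_mul (by simpa [hmass] using ENNReal.ofReal_le_ofReal hαβ)
  have hle (ρ : Measure X) : c • ρ ≤ ρ := fun A ↦ mul_le_of_le_one_left zero_le hc
  refine ⟨c • γ, fun A ↦ mul_le_of_le_one_left zero_le hc, ?_, ?_, ?_⟩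
  · refine ENNReal.div_mul_cancel' (fun h0 ↦ ?_) (fun htop ↦ ?_)
    · exact le_antisymm (h0 ▸ hmass ▸ ENNReal.ofReal_le_ofReal hαβ) zero_le
    · simp [hmass] at htop
  · rw [Measure.map_smul]
    exact (hle _).trans hfst
  · rw [Measure.map_smul]
    exact (hle _).trans hsnd

end Plans

section Cost

variable {X : Type*} [MetricSpace X] [MeasurableSpace X] {μ ν : Measure X} {γ : Measure (X × X)}

lemma planCostInf_nonneg : 0 ≤ planCostInf γ := ENNReal.toReal_nonneg

lemma planCostInf_le_of_ae_dist_le {c : ℝ} (hc : 0 ≤ c) (h : ∀ᵐ z ∂γ, dist z.1 z.2 ≤ c) :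
    planCostInf γ ≤ c :=
  ENNReal.toReal_le_of_le_ofReal hc <|
    essSup_le_of_ae_le _ <| h.mono fun _ hz ↦ ENNReal.ofReal_le_ofReal hz

-- On an unbounded space the essential supremum may be `∞`, which `toReal` sends to `0`.
lemma ae_dist_le_planCostInf [BoundedSpace X] : ∀ᵐ z ∂γ, dist z.1 z.2 ≤ planCostInf γ := by
  have hfin : essSup (fun z : X × X ↦ ENNReal.ofReal (dist z.1 z.2)) γ ≠ ∞ := by
    refine ne_top_of_le_ne_top ENNReal.ofReal_ne_top <| essSup_le_of_ae_le
      (ENNReal.ofReal (Metric.diam (Set.univ : Set X))) <| .of_forall fun z ↦ ?_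
    exact ENNReal.ofReal_le_ofReal <|
      Metric.dist_le_diam_of_mem (Bornology.IsBounded.all _) trivial trivial
  filter_upwards [ENNReal.ae_le_essSup (μ := γ) fun z : X × X ↦ ENNReal.ofReal (dist z.1 z.2)]
    with z hz
  exact (ENNReal.ofReal_le_iff_le_toReal hfin).1 hz

lemma IsPartialPlan.partialWInf_le {α c : ℝ} (hγ : IsPartialPlan μ ν α γ) (hc : 0 ≤ c)
    (h : ∀ᵐ z ∂γ, dist z.1 z.2 ≤ c) : partialWInf α μ ν ≤ c :=
  have hbdd : BddBelow {c : ℝ | ∃ γ, IsPartialPlan μ ν α γ ∧ c = planCostInf γ} :=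
    ⟨0, by rintro _ ⟨γ, -, rfl⟩; exact planCostInf_nonneg⟩
  (csInf_le hbdd ⟨γ, hγ, rfl⟩).trans (planCostInf_le_of_ae_dist_le hc h)

lemma exists_isPartialPlan_ae_dist_lt_of_partialWInf_lt [BoundedSpace X] [IsProbabilityMeasure μ]
    [IsProbabilityMeasure ν] {α c : ℝ} (hα : α ≤ 1) (h : partialWInf α μ ν < c) :
    ∃ γ, IsPartialPlan μ ν α γ ∧ ∀ᵐ z ∂γ, dist z.1 z.2 < c := by
  obtain ⟨γ₀, -, hγ₀⟩ := (isPartialPlan_prod (μ := μ) (ν := ν)).exists_le hα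
  have hne : {c : ℝ | ∃ γ, IsPartialPlan μ ν α γ ∧ c = planCostInf γ}.Nonempty :=
    ⟨planCostInf γ₀, γ₀, hγ₀, rfl⟩
  obtain ⟨_, ⟨γ, hγ, rfl⟩, hc⟩ := exists_lt_of_csInf_lt hne h
  exact ⟨γ, hγ, ae_dist_le_planCostInf.mono fun _ hz ↦ hz.trans_lt hc⟩

lemma one_mem_setOf_partialWInf_le {k : ℝ} (hk : 0 ≤ k) :
    (1 : ℝ) ∈ {ε : ℝ | ε ∈ Set.Icc (0 : ℝ) 1 ∧ partialWInf (1 - ε) μ ν ≤ k * ε} :=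
  ⟨by simp, by simpa using isPartialPlan_zero.partialWInf_le hk (by simp)⟩

lemma IsPartialPlan.rpwInf_le {k ε : ℝ} (hγ : IsPartialPlan μ ν (1 - ε) γ) (hk : 0 ≤ k)
    (hε : 0 ≤ ε) (h : ∀ᵐ z ∂γ, dist z.1 z.2 ≤ k * ε) : RPWInf k μ ν ≤ ε := by
  have hbdd : BddBelow {ε : ℝ | ε ∈ Set.Icc (0 : ℝ) 1 ∧ partialWInf (1 - ε) μ ν ≤ k * ε} :=
    ⟨0, fun _ hε' ↦ hε'.1.1⟩
  obtain hε1 | hε1 := le_total ε 1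
  · exact csInf_le hbdd ⟨⟨hε, hε1⟩, hγ.partialWInf_le (mul_nonneg hk hε) h⟩
  · exact (csInf_le hbdd (one_mem_setOf_partialWInf_le hk)).trans hε1

lemma exists_isPartialPlan_of_rpwInf_lt [BoundedSpace X] [IsProbabilityMeasure μ]
    [IsProbabilityMeasure ν] {k η : ℝ} (hk : 0 < k) (h : RPWInf k μ ν < η) :
    ∃ ε ∈ Set.Ico 0 η, ∃ γ, IsPartialPlan μ ν (1 - ε) γ ∧ ∀ᵐ z ∂γ, dist z.1 z.2 < k * η := by
  obtain ⟨ε, ⟨⟨hε0, -⟩, hW⟩, hεη⟩ :=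
    exists_lt_of_csInf_lt (s := {ε | ε ∈ Set.Icc (0 : ℝ) 1 ∧ partialWInf (1 - ε) μ ν ≤ k * ε})
      ⟨1, one_mem_setOf_partialWInf_le hk.le⟩ h
  exact ⟨ε, ⟨hε0, hεη⟩, exists_isPartialPlan_ae_dist_lt_of_partialWInf_lt (by linarith)
    (hW.trans_lt (by gcongr))⟩

end Cost

section Thickening

open Metric

lemma measure_le_measure_thickening_add {Ω X : Type*} [MeasurableSpace Ω] [PseudoMetricSpace X]
    [MeasurableSpace X] [OpensMeasurableSpace X] {μ ν : Measure X} [IsFiniteMeasure μ]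
    {γ : Measure Ω} {f g : Ω → X} (hf : Measurable f) (hg : Measurable g)
    (hfμ : γ.map f ≤ μ) (hgν : γ.map g ≤ ν) {ε : ℝ≥0∞} (hmass : μ Set.univ ≤ γ Set.univ + ε)
    {r : ℝ} (hr : ∀ᵐ z ∂γ, dist (f z) (g z) < r) {A : Set X} (hA : MeasurableSet A) :
    μ A ≤ ν (thickening r A) + ε := by
  have hcompl : μ A + μ Aᶜ ≤ γ (f ⁻¹' A) + ε + μ Aᶜ := calc
    μ A + μ Aᶜ = μ Set.univ := measure_add_measure_compl hA
    _ ≤ γ Set.univ + ε := hmass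
    _ = γ (f ⁻¹' A) + γ.map f Aᶜ + ε := by
      rw [Measure.map_apply hf hA.compl, Set.preimage_compl, measure_add_measure_compl (hf hA)]
    _ ≤ γ (f ⁻¹' A) + μ Aᶜ + ε := by gcongr
    _ = γ (f ⁻¹' A) + ε + μ Aᶜ := add_right_comm ..
  calc μ A ≤ γ (f ⁻¹' A) + ε := (ENNReal.add_le_add_iff_right (measure_ne_top μ _)).1 hcompl
    _ ≤ γ (g ⁻¹' thickening r A) + ε := by
      gcongr 1
      refine measure_mono_ae <| hr.mono fun z hz (hzA : f z ∈ A) ↦ ?_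
      exact mem_thickening_iff.2 ⟨f z, hzA, dist_comm (f z) (g z) ▸ hz⟩
    _ = γ.map g (thickening r A) + ε := by
      rw [Measure.map_apply hg isOpen_thickening.measurableSet]
    _ ≤ ν (thickening r A) + ε := by gcongr

end Thickening

section Cells

open ProbabilityTheory

variable {X : Type*} [MeasurableSpace X]

lemma sum_smul_cond_le {ι : Type*} [Fintype ι] {μ : Measure X} {A : ι → Set X}
    (hA : ∀ i, MeasurableSet (A i)) (hdisj : Pairwise (Function.onFun Disjoint A)) {c : ι → ℝ≥0∞}
    (hc : ∀ i, c i ≤ μ (A i)) : ∑ i, c i • μ[|A i] ≤ μ := calc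
  ∑ i, c i • μ[|A i] ≤ ∑ i, μ.restrict (A i) := by
    refine Finset.sum_le_sum fun i _ ↦ ?_
    rw [ProbabilityTheory.cond, smul_smul]
    refine fun B ↦ mul_le_of_le_one_left zero_le ?_
    grw [hc i]
    exact ENNReal.mul_inv_le_one _
  _ = μ.restrict (⋃ i, A i) := by rw [Measure.restrict_iUnion hdisj hA, Measure.sum_fintype]
  _ ≤ μ := Measure.restrict_le_self

lemma cond_prod_cond_univ {μ ν : Measure X} [IsFiniteMeasure μ] [IsFiniteMeasure ν] {A B : Set X}
    (hA : μ A ≠ 0) (hB : ν B ≠ 0) : (μ[|A].prod ν[|B]) Set.univ = 1 := by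
  have := cond_isProbabilityMeasure hA
  have := cond_isProbabilityMeasure hB
  exact measure_univ

lemma ae_cond_prod_cond {μ ν : Measure X} {A B : Set X} (hA : MeasurableSet A)
    (hB : MeasurableSet B) : ∀ᵐ z ∂μ[|A].prod ν[|B], z.1 ∈ A ∧ z.2 ∈ B :=
  (Measure.quasiMeasurePreserving_fst.ae (ae_cond_mem hA)).and
    (Measure.quasiMeasurePreserving_snd.ae (ae_cond_mem hB))

lemma map_fst_cond_prod_cond_le {μ ν : Measure X} {A B : Set X} :
    (μ[|A].prod ν[|B]).map Prod.fst ≤ μ[|A] := by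
  rw [Measure.map_fst_prod]
  exact fun _ ↦ mul_le_of_le_one_left zero_le prob_le_one

lemma map_snd_cond_prod_cond_le {μ ν : Measure X} {A B : Set X} :
    (μ[|A].prod ν[|B]).map Prod.snd ≤ ν[|B] := by
  rw [Measure.map_snd_prod]
  exact fun _ ↦ mul_le_of_le_one_left zero_le prob_le_one

/-- The plan that realises a flow `g` between cells: mass `g i j` is spread over `A i × B j` as
the product of the normalised restrictions of `μ` and `ν`. -/
def cellPlan {ι κ : Type*} [Fintype ι] [Fintype κ] (μ ν : Measure X) (A : ι → Set X)
    (B : κ → Set X) (g : ι → κ → ℝ≥0) : Measure (X × X) :=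
  ∑ i, ∑ j, g i j • μ[|A i].prod ν[|B j]

section CellPlan

variable {ι κ : Type*} [Fintype ι] [Fintype κ] {μ ν : Measure X}
  {A : ι → Set X} {B : κ → Set X} {g : ι → κ → ℝ≥0}

lemma ae_cellPlan (hA : ∀ i, MeasurableSet (A i)) (hB : ∀ j, MeasurableSet (B j)) :
    ∀ᵐ z ∂cellPlan μ ν A B g, ∃ i j, g i j ≠ 0 ∧ z.1 ∈ A i ∧ z.2 ∈ B j := by
  refine ae_finsetSum_measure_iff.2 fun i _ ↦
    ae_finsetSum_measure_iff.2 fun j _ ↦ ?_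
  obtain h | h := eq_or_ne (g i j) 0
  · simp [h]
  · exact Measure.ae_smul_measure
      ((ae_cond_prod_cond (hA i) (hB j)).mono fun z hz ↦ ⟨i, j, h, hz⟩) _

lemma cellPlan_univ [IsFiniteMeasure μ] [IsFiniteMeasure ν]
    (hgμ : ∀ i j, g i j ≤ μ (A i)) (hgν : ∀ i j, g i j ≤ ν (B j)) :
    cellPlan μ ν A B g Set.univ = ∑ i, ∑ j, (g i j : ℝ≥0∞) := by
  have mass (i : ι) (j : κ) : g i j • (μ[|A i].prod ν[|B j]) Set.univ = g i j := by
    obtain h | h := eq_or_ne (g i j) 0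
    · simp [h]
    have hpos : 0 < (g i j : ℝ≥0∞) := by simpa [pos_iff_ne_zero] using h
    simp [cond_prod_cond_univ (hpos.trans_le (hgμ i j)).ne' (hpos.trans_le (hgν i j)).ne',
      ENNReal.smul_def]
  simp only [cellPlan, Measure.finsetSum_apply, Measure.smul_apply, mass]

lemma map_fst_cellPlan_le (hA : ∀ i, MeasurableSet (A i))
    (hdisj : Pairwise (Function.onFun Disjoint A)) (hgμ : ∀ i, ∑ j, (g i j : ℝ≥0∞) ≤ μ (A i)) :
    (cellPlan μ ν A B g).map Prod.fst ≤ μ := calc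
  _ = ∑ i, ∑ j, g i j • (μ[|A i].prod ν[|B j]).map Prod.fst := by
    simp [cellPlan, Measure.map_finset_sum measurable_fst.aemeasurable, Measure.map_smul]
  _ ≤ ∑ i, ∑ j, g i j • μ[|A i] := by gcongr; exact map_fst_cond_prod_cond_le
  _ = ∑ i, (∑ j, (g i j : ℝ≥0∞)) • μ[|A i] := by simp only [Finset.sum_smul]; rfl
  _ ≤ μ := sum_smul_cond_le hA hdisj hgμ

lemma map_snd_cellPlan_le (hB : ∀ j, MeasurableSet (B j))
    (hdisj : Pairwise (Function.onFun Disjoint B)) (hgν : ∀ j, ∑ i, (g i j : ℝ≥0∞) ≤ ν (B j)) :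
    (cellPlan μ ν A B g).map Prod.snd ≤ ν := calc
  _ = ∑ i, ∑ j, g i j • (μ[|A i].prod ν[|B j]).map Prod.snd := by
    simp [cellPlan, Measure.map_finset_sum measurable_snd.aemeasurable, Measure.map_smul]
  _ ≤ ∑ i, ∑ j, g i j • ν[|B j] := by gcongr; exact map_snd_cond_prod_cond_le
  _ = ∑ j, (∑ i, (g i j : ℝ≥0∞)) • ν[|B j] := by
    rw [Finset.sum_comm]; simp only [Finset.sum_smul]; rfl
  _ ≤ ν := sum_smul_cond_le hB hdisj hgν

lemma IsFeasibleFlow.isPartialPlan_cellPlan [IsFiniteMeasure μ] [IsFiniteMeasure ν]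
    {t : ι → Finset κ}
    (hg : IsFeasibleFlow t (fun i ↦ (μ (A i)).toNNReal) (fun j ↦ (ν (B j)).toNNReal) g)
    (hA : ∀ i, MeasurableSet (A i)) (hAdisj : Pairwise (Function.onFun Disjoint A))
    (hB : ∀ j, MeasurableSet (B j)) (hBdisj : Pairwise (Function.onFun Disjoint B)) :
    IsPartialPlan μ ν (∑ i, ∑ j, g i j : ℝ≥0) (cellPlan μ ν A B g) := by
  have row_le (i : ι) : ∑ j, (g i j : ℝ≥0∞) ≤ μ (A i) := by
    rw [← ENNReal.coe_toNNReal (measure_ne_top μ (A i))]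
    exact_mod_cast hg.sum_row_le i
  have col_le (j : κ) : ∑ i, (g i j : ℝ≥0∞) ≤ ν (B j) := by
    rw [← ENNReal.coe_toNNReal (measure_ne_top ν (B j))]
    exact_mod_cast hg.sum_col_le j
  have le_row (i : ι) (j : κ) : g i j ≤ μ (A i) :=
    (Finset.single_le_sum_of_canonicallyOrdered (Finset.mem_univ j)).trans (row_le i)
  have le_col (i : ι) (j : κ) : g i j ≤ ν (B j) :=
    (Finset.single_le_sum_of_canonicallyOrdered
      (f := fun i ↦ (g i j : ℝ≥0∞)) (Finset.mem_univ i)).trans (col_le j)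
  refine ⟨?_, map_fst_cellPlan_le hA hAdisj row_le, map_snd_cellPlan_le hB hBdisj col_le⟩
  rw [cellPlan_univ le_row le_col, ENNReal.ofReal_coe_nnreal]
  push_cast
  rfl

end CellPlan

end Cells

section Neighbors

open Metric

variable {X ι κ : Type*} [PseudoMetricSpace X] [Fintype κ]

open Classical in
/-- The cells `B j` that contain a point at distance less than `r` from a point of `A i`: the
edges of the transport network, so that a flow along them moves mass by little more than `r`. -/
def cellNeighbors (r : ℝ) (A : ι → Set X) (B : κ → Set X) (i : ι) : Finset κ :=
  {j | ∃ x ∈ A i, ∃ y ∈ B j, dist x y < r}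

lemma thickening_biUnion_subset [DecidableEq κ] (r : ℝ) (A : ι → Set X)
    (B : κ → Set X) (I : Finset ι) : thickening r (⋃ i ∈ I, A i) ⊆
      (⋃ j ∈ I.biUnion (cellNeighbors r A B), B j) ∪ (⋃ j, B j)ᶜ := by
  intro y hy
  obtain hyB | hyB := em (y ∈ ⋃ j, B j)
  · obtain ⟨j, hj⟩ := Set.mem_iUnion.1 hyB
    obtain ⟨x, hx, hyx⟩ := mem_thickening_iff.1 hy
    obtain ⟨i, hi, hxi⟩ := Set.mem_iUnion₂.1 hx
    refine .inl <| Set.mem_biUnion (Finset.mem_biUnion.2 ⟨i, hi, ?_⟩) hj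
    simpa [cellNeighbors] using ⟨x, hxi, y, hj, dist_comm y x ▸ hyx⟩
  · exact .inr hyB

lemma sum_measure_le_sum_biUnion_cellNeighbors [DecidableEq κ] [MeasurableSpace X]
    [OpensMeasurableSpace X] {μ ν : Measure X} {r : ℝ} {ε : ℝ≥0∞}
    (h : ∀ C, MeasurableSet C → μ C ≤ ν (thickening r C) + ε) {A : ι → Set X}
    (hA : ∀ i, MeasurableSet (A i)) (hdisj : Pairwise (Function.onFun Disjoint A)) (B : κ → Set X)
    (I : Finset ι) :
    ∑ i ∈ I, μ (A i) ≤
      ∑ j ∈ I.biUnion (cellNeighbors r A B), ν (B j) + (ν (⋃ j, B j)ᶜ + ε) := calc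
  ∑ i ∈ I, μ (A i) = μ (⋃ i ∈ I, A i) :=
    (measure_biUnion_finset (hdisj.set_pairwise _) fun i _ ↦ hA i).symm
  _ ≤ ν (thickening r (⋃ i ∈ I, A i)) + ε := h _ (I.measurableSet_biUnion fun i _ ↦ hA i)
  _ ≤ ν (⋃ j ∈ I.biUnion (cellNeighbors r A B), B j) + ν (⋃ j, B j)ᶜ + ε := by
    grw [thickening_biUnion_subset r A B I, measure_union_le]
  _ ≤ _ := by grw [measure_biUnion_finset_le, add_assoc]

theorem exists_isFeasibleFlow_cellNeighbors [Fintype ι] [MeasurableSpace X]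
    [OpensMeasurableSpace X] {μ ν : Measure X} [IsFiniteMeasure μ] [IsFiniteMeasure ν] {r : ℝ}
    {ε η : ℝ≥0} (hη : 0 < η) (h : ∀ C, MeasurableSet C → μ C ≤ ν (thickening r C) + ε)
    {A : ι → Set X} (hA : ∀ i, MeasurableSet (A i)) (hdisj : Pairwise (Function.onFun Disjoint A))
    (B : κ → Set X) :
    ∃ g : ι → κ → ℝ≥0, IsFeasibleFlow (cellNeighbors r A B) (fun i ↦ (μ (A i)).toNNReal)
        (fun j ↦ (ν (B j)).toNNReal) g ∧
      μ Set.univ ≤ ∑ i, ∑ j, (g i j : ℝ≥0∞) + (μ (⋃ i, A i)ᶜ + ν (⋃ j, B j)ᶜ) + ε + η := by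
  classical
  have coe_toNNReal (ρ : Measure X) [IsFiniteMeasure ρ] (C : Set X) :
      ((ρ C).toNNReal : ℝ≥0∞) = ρ C := ENNReal.coe_toNNReal (measure_ne_top ρ C)
  obtain ⟨g, hg, htotal⟩ := exists_isFeasibleFlow_of_sum_le_sum_biUnion_add
    (t := cellNeighbors r A B) (a := fun i ↦ (μ (A i)).toNNReal)
    (b := fun j ↦ (ν (B j)).toNNReal) (δ := (ν (⋃ j, B j)ᶜ).toNNReal + ε) hη fun I ↦ by
      simpa only [← ENNReal.coe_le_coe, ENNReal.coe_add, ENNReal.ofNNReal_finsetSum, coe_toNNReal]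
        using sum_measure_le_sum_biUnion_cellNeighbors h hA hdisj B I
  simp only [← ENNReal.coe_le_coe, ENNReal.coe_add, ENNReal.ofNNReal_finsetSum, coe_toNNReal]
    at htotal
  refine ⟨g, hg, ?_⟩
  calc μ Set.univ = μ (⋃ i, A i) + μ (⋃ i, A i)ᶜ := (measure_add_measure_compl (.iUnion hA)).symm
    _ ≤ ∑ i, μ (A i) + μ (⋃ i, A i)ᶜ := by grw [measure_iUnion_fintype_le]
    _ ≤ ∑ i, ∑ j, (g i j : ℝ≥0∞) + (ν (⋃ j, B j)ᶜ + ε) + η + μ (⋃ i, A i)ᶜ := by gcongr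
    _ = _ := by ring

end Neighbors

section Strassen

open Metric

variable {X : Type*} [PseudoMetricSpace X] [SecondCountableTopology X] [MeasurableSpace X]
  [OpensMeasurableSpace X]

lemma exists_disjoint_cells_measure_compl_le (ρ : Measure X) [IsFiniteMeasure ρ] {δ : ℝ}
    (hδ : 0 < δ) {η : ℝ≥0∞} (hη : 0 < η) :
    ∃ (n : ℕ) (A : Fin n → Set X), (∀ i, MeasurableSet (A i)) ∧
      Pairwise (Function.onFun Disjoint A) ∧ (∀ i, ∀ x ∈ A i, ∀ y ∈ A i, dist x y ≤ δ) ∧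
      ρ (⋃ i, A i)ᶜ ≤ η := by
  obtain ⟨A, hA, hbdd, hdiam, hunion, hdisj⟩ :=
    SeparableSpace.exists_measurable_partition_diam_le X hδ
  obtain ⟨n, hn⟩ := ((tendsto_measure_biUnion_Ici_zero_of_pairwise_disjoint
    (μ := ρ) (fun i ↦ (hA i).nullMeasurableSet) hdisj).eventually_le_const hη).exists
  refine ⟨n, fun i ↦ A i, fun i ↦ hA i, fun i j hij ↦ hdisj (Fin.val_injective.ne hij),
    fun i x hx y hy ↦ (dist_le_diam_of_mem (hbdd i) hx hy).trans (hdiam i), ?_⟩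
  refine (measure_mono fun x hx ↦ ?_).trans hn
  obtain ⟨i, hi⟩ := Set.mem_iUnion.1 (hunion ▸ Set.mem_univ x)
  have hni : n ≤ i := by
    by_contra! hin
    exact hx (Set.mem_iUnion.2 ⟨⟨i, hin⟩, hi⟩)
  exact Set.mem_biUnion hni hi

theorem exists_isPartialPlan_of_forall_measure_le_thickening_add {μ ν : Measure X}
    [IsProbabilityMeasure μ] [IsProbabilityMeasure ν] {r : ℝ} {ε δ : ℝ≥0} (hδ : 0 < δ)
    (h : ∀ C, MeasurableSet C → μ C ≤ ν (thickening r C) + ε) :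
    ∃ γ, IsPartialPlan μ ν (1 - ε - δ) γ ∧ ∀ᵐ z ∂γ, dist z.1 z.2 ≤ r + δ := by
  have hδ2 : 0 < δ / 2 := half_pos hδ
  obtain ⟨n, A, hA, hdisj, hdiam, hrest⟩ := exists_disjoint_cells_measure_compl_le (μ + ν)
    (NNReal.coe_pos.2 hδ2) (ENNReal.coe_pos.2 hδ2)
  obtain ⟨g, hg, htotal⟩ := exists_isFeasibleFlow_cellNeighbors hδ2 h hA hdisj A
  have mass_ge : (1 : ℝ) ≤ (∑ i, ∑ j, g i j : ℝ≥0) + ε + δ := by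
    suffices (1 : ℝ≥0∞) ≤ (∑ i, ∑ j, g i j : ℝ≥0) + ε + δ by exact_mod_cast this
    calc (1 : ℝ≥0∞) = μ Set.univ := measure_univ.symm
      _ ≤ _ := htotal
      _ ≤ ∑ i, ∑ j, (g i j : ℝ≥0∞) + (δ / 2 : ℝ≥0) + ε + (δ / 2 : ℝ≥0) := by
        gcongr
        exact hrest
      _ = ∑ i, ∑ j, (g i j : ℝ≥0∞) + ε + ((δ / 2 : ℝ≥0) + (δ / 2 : ℝ≥0)) := by ring
      _ = _ := by rw [← ENNReal.coe_add, add_halves]; simp only [ENNReal.ofNNReal_finsetSum]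
  obtain ⟨γ, hγle, hγ⟩ := (hg.isPartialPlan_cellPlan hA hdisj hA hdisj).exists_le
    (α := 1 - ε - δ) (by linarith)
  refine ⟨γ, hγ, ae_mono hγle ?_⟩
  filter_upwards [ae_cellPlan hA hA] with z ⟨i, j, hij, hzi, hzj⟩
  obtain ⟨x, hx, y, hy, hxy⟩ : ∃ x ∈ A i, ∃ y ∈ A j, dist x y < r := by
    simpa [cellNeighbors] using hg.mem_of_ne_zero i j hij
  calc dist z.1 z.2 ≤ dist z.1 x + dist x y + dist y z.2 := dist_triangle4 ..
    _ ≤ (δ / 2 : ℝ≥0) + r + (δ / 2 : ℝ≥0) := by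
      gcongr
      exacts [hdiam i _ hzi x hx, hdiam j y hy _ hzj]
    _ = r + δ := by push_cast; ring

end Strassen

section LevyProkhorov

open Metric

variable {X : Type*} [MetricSpace X] [MeasurableSpace X] [OpensMeasurableSpace X] {μ ν : Measure X}
  [IsProbabilityMeasure μ] [IsProbabilityMeasure ν]

lemma rpwInf_one_le_of_forall_measure_le_thickening_add [SecondCountableTopology X] {ε : ℝ}
    (hε : 0 ≤ ε)
    (h : ∀ A, MeasurableSet A → μ A ≤ ν (thickening ε A) + ENNReal.ofReal ε) :
    RPWInf 1 μ ν ≤ ε := by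
  lift ε to ℝ≥0 using hε
  simp only [ENNReal.ofReal_coe_nnreal] at h
  refine le_of_forall_pos_le_add fun δ hδ ↦ ?_
  lift δ to ℝ≥0 using hδ.le
  obtain ⟨γ, hγ, hdist⟩ := exists_isPartialPlan_of_forall_measure_le_thickening_add
    (NNReal.coe_pos.1 hδ) h
  rw [sub_sub] at hγ
  exact hγ.rpwInf_le zero_le_one (by positivity) (by simpa using hdist)

lemma lpdist_le_of_rpwInf_one_lt [BoundedSpace X] {η : ℝ} (h : RPWInf 1 μ ν < η) :
    LPdist μ ν ≤ η := by
  obtain ⟨ε, ⟨hε0, hεη⟩, γ, hγ, hdist⟩ := exists_isPartialPlan_of_rpwInf_lt one_pos h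
  rw [one_mul] at hdist
  have hmass : 1 ≤ γ Set.univ + ENNReal.ofReal η := by
    rw [hγ.1]
    grw [← ENNReal.ofReal_add_le, ← hεη]
    simp
  refine csInf_le ⟨0, fun _ h' ↦ h'.1.le⟩ ⟨hε0.trans_lt hεη, fun A hA ↦ ⟨?_, ?_⟩⟩
  · exact measure_le_measure_thickening_add measurable_fst measurable_snd hγ.2.1 hγ.2.2
      (by simpa using hmass) hdist hA
  · exact measure_le_measure_thickening_add measurable_snd measurable_fst hγ.2.2 hγ.2.1
      (by simpa using hmass) (by simpa only [dist_comm] using hdist) hA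

end LevyProkhorov

theorem rpwInf_eq_levyProkhorov_of_finite_support_general {X : Type*} [MetricSpace X]
    [BoundedSpace X] [SecondCountableTopology X] [MeasurableSpace X] [OpensMeasurableSpace X]
    (μ ν : Measure X) [IsProbabilityMeasure μ] [IsProbabilityMeasure ν] :
    RPWInf 1 μ ν = LPdist μ ν := by
  refine le_antisymm (le_csInf ⟨1, one_pos, fun A _ ↦ ?_⟩ fun ε hε ↦ ?_)
    (le_of_forall_gt_imp_ge_of_dense fun η hη ↦ lpdist_le_of_rpwInf_one_lt hη)
  · simpa using ⟨prob_le_one.trans le_add_self, prob_le_one.trans le_add_self⟩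
  · exact rpwInf_one_le_of_forall_measure_le_thickening_add hε.1.le fun A hA ↦ (hε.2 A hA).1

/-- For finitely supported probability measures `μ, ν` on a compact
metric space of unit diameter, `RPW_{∞,1}(μ, ν)` equals the Lévy–Prokhorov distance. -/
theorem rpwInf_eq_levyProkhorov_of_finite_support
    {X : Type*} [MetricSpace X] [CompactSpace X] [MeasurableSpace X] [BorelSpace X]
    (hdiam : ∀ a b : X, dist a b ≤ 1)
    (μ ν : Measure X) [IsProbabilityMeasure μ] [IsProbabilityMeasure ν]
    (hμ : ∃ s : Finset X, μ (↑s : Set X)ᶜ = 0)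
    (hν : ∃ s : Finset X, ν (↑s : Set X)ᶜ = 0) :
    RPWInf 1 μ ν = LPdist μ ν :=
  rpwInf_eq_levyProkhorov_of_finite_support_general μ ν
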